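/- The function V(z, φ) := (1/2πi)·Σ_{n>0} (e^{inφ}/n²)·K₀(2πn|z|) of z ∈ ℂˣ and φ ∈ ℝ, where K₀ is the modified Bessel function of the second kind, satisfies the linear PDE ∂²V/∂Z∂Z̄ + π²·∂²V/∂φ² = 0 (with Z = z treated as holomorphic coordinate), as a consequence of the Bessel identities K₀'(x) = −K₁(x) and (xK₁(x))' = −xK₀(x). -/

import Mathlib

/- Verification of the second Plebański-like linear PDE (4.20) for
V(z,φ) = (1/2πi)Σ_{n>0} (e^{inφ}/n²)K₀(2πn|z|), viewed as a function of
(x, y, φ) ∈ ℝ³ with z = x + iy: ∂²V/∂Z∂Z̄ + π²∂²V/∂φ² = 0 for z ≠ 0,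
as a consequence of K₀' = −K₁ and (xK₁)' = −xK₀. -/

/-- Modified Bessel function K₀ (integral representation). -/
noncomputable def K0 (x : ℝ) : ℝ :=
  ∫ t in Set.Ioi (0 : ℝ), Real.exp (-x * Real.cosh t)

/-- Modified Bessel function K₁ (integral representation). -/
noncomputable def K1 (x : ℝ) : ℝ :=
  ∫ t in Set.Ioi (0 : ℝ), Real.exp (-x * Real.cosh t) * Real.cosh t

/-- Partial derivative in the i-th coordinate of ℝ³. -/
noncomputable def pd3 (i : Fin 3) (f : (Fin 3 → ℝ) → ℂ) (p : Fin 3 → ℝ) : ℂ :=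
  fderiv ℝ f p (Pi.single i 1)

/-- Wirtinger derivative ∂/∂Z = ½(∂/∂x − i∂/∂y). -/
noncomputable def wZ (f : (Fin 3 → ℝ) → ℂ) (p : Fin 3 → ℝ) : ℂ :=
  (1 / 2 : ℂ) * (pd3 0 f p - Complex.I * pd3 1 f p)

/-- Wirtinger derivative ∂/∂Z̄ = ½(∂/∂x + i∂/∂y). -/
noncomputable def wZb (f : (Fin 3 → ℝ) → ℂ) (p : Fin 3 → ℝ) : ℂ :=
  (1 / 2 : ℂ) * (pd3 0 f p + Complex.I * pd3 1 f p)

/-- V(z,φ) = (1/2πi)Σ_{n>0} (e^{inφ}/n²)K₀(2πn|z|), z = p₀ + i·p₁, φ = p₂. -/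
noncomputable def Vfun (p : Fin 3 → ℝ) : ℂ :=
  (1 / (2 * (Real.pi : ℂ) * Complex.I)) *
    ∑' n : ℕ, Complex.exp (Complex.I * ((n : ℂ) + 1) * ((p 2 : ℝ) : ℂ))
        / ((n : ℂ) + 1) ^ 2 *
      ((K0 (2 * Real.pi * ((n : ℝ) + 1) * Real.sqrt ((p 0) ^ 2 + (p 1) ^ 2)) : ℝ) : ℂ)

open Asymptotics Complex Filter MeasureTheory Set Topology
open scoped ComplexConjugate Real

/-! For a mode `u = e^{iνφ} h(κνr)` with `r = |z|`, one has `∂u/∂Z̄ = (z / 2r) κν e^{iνφ} h'(κνr)`.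
With `h = K₀` and `z / r² = 1 / z̄` this is `-(1 / 2z̄) e^{iνφ} (xK₁)(κνr)`. The factor `1 / z̄` is
antiholomorphic, so `∂/∂Z` only sees `xK₁`, whose derivative is `-xK₀`; the result is `(κν/2)² u`,
while `∂²u/∂φ² = -ν²u`. Exponential decay of the Bessel functions lets the series be
differentiated term by term. -/

/-! ### Fourier series in cylindrical coordinates -/

/-- Exponential decay on every half-line `[ε, ∞)` with `ε > 0`, at a rate that may depend on `ε`.
Nothing is required near `0`, where the Bessel functions `K₀`, `K₁` are singular. -/
def ExpDecay (h : ℝ → ℂ) : Prop :=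
  ∀ ε > 0, ∃ a > 0, h =O[𝓟 (Ici ε)] fun x => Real.exp (-a * x)

/-- At most polynomial growth of a sequence of coefficients. The comparison sequence `(n + 1)^k`
has no zeros, so that the bound holds for all `n`. -/
def PolyGrowth (c : ℕ → ℂ) : Prop :=
  ∃ k : ℕ, c =O[atTop] fun n => ((n : ℝ) + 1) ^ k

/-- The Fourier mode `e^{iνφ} h(κνr)` of frequency `ν = n + 1` at the point `q = (r, φ)`. -/
noncomputable def mode (κ : ℝ) (h : ℝ → ℂ) (n : ℕ) (q : ℝ × ℝ) : ℂ :=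
  exp (I * ((n : ℂ) + 1) * q.2) * h (κ * ((n : ℝ) + 1) * q.1)

/-- The Fourier series with coefficients `c` in the modes `mode κ h n`. -/
noncomputable def modeSeries (κ : ℝ) (c : ℕ → ℂ) (h : ℝ → ℂ) (q : ℝ × ℝ) : ℂ :=
  ∑' n, c n * mode κ h n q

/-- The linear form on `ℝ × ℝ` with partial derivatives `a` and `b`. -/
noncomputable def ofPartials (a b : ℂ) : ℝ × ℝ →L[ℝ] ℂ :=
  (ContinuousLinearMap.fst ℝ ℝ ℝ).smulRight a + (ContinuousLinearMap.snd ℝ ℝ ℝ).smulRight b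

@[simp]
theorem ofPartials_apply (a b : ℂ) (v : ℝ × ℝ) : ofPartials a b v = v.1 * a + v.2 * b := by
  simp [ofPartials]

theorem norm_ofPartials_le (a b : ℂ) : ‖ofPartials a b‖ ≤ ‖a‖ + ‖b‖ := by
  refine (norm_add_le _ _).trans (add_le_add ?_ ?_) <;>
    rw [ContinuousLinearMap.norm_smulRight_apply]
  · exact mul_le_of_le_one_left (norm_nonneg _) (ContinuousLinearMap.norm_fst_le ..)
  · exact mul_le_of_le_one_left (norm_nonneg _) (ContinuousLinearMap.norm_snd_le ..)

theorem tsum_ofPartials {ι : Type*} {a b : ι → ℂ} (ha : Summable a) (hb : Summable b) :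
    ∑' i, ofPartials (a i) (b i) = ofPartials (∑' i, a i) (∑' i, b i) :=
  ((ha.hasSum.mapL (ContinuousLinearMap.smulRightL ℝ (ℝ × ℝ) ℂ (.fst ℝ ℝ ℝ))).add
    (hb.hasSum.mapL (ContinuousLinearMap.smulRightL ℝ (ℝ × ℝ) ℂ (.snd ℝ ℝ ℝ)))).tsum_eq

theorem isBigO_id_exp_mul {ε a : ℝ} (hε : 0 < ε) (ha : 0 < a) :
    (fun x : ℝ => (x : ℂ)) =O[𝓟 (Ici ε)] fun x => Real.exp (a * x) := by
  refine isBigO_principal.2 ⟨a⁻¹, fun x hx => ?_⟩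
  rw [norm_real, Real.norm_of_nonneg (hε.le.trans hx), Real.norm_of_nonneg (Real.exp_pos _).le,
    le_inv_mul_iff₀ ha]
  linarith [Real.add_one_le_exp (a * x)]

namespace ExpDecay

variable {h : ℝ → ℂ}

theorem neg (hh : ExpDecay h) : ExpDecay (fun x => -h x) := fun ε hε =>
  let ⟨a, ha, hO⟩ := hh ε hε
  ⟨a, ha, hO.neg_left⟩

theorem id_mul (hh : ExpDecay h) : ExpDecay (fun x => x * h x) := by
  intro ε hε
  obtain ⟨a, ha, hO⟩ := hh ε hε
  refine ⟨a / 2, half_pos ha, ((isBigO_id_exp_mul hε (half_pos ha)).mul hO).congr_right fun x => ?_⟩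
  rw [← Real.exp_add]
  ring_nf

end ExpDecay

theorem norm_natCast_add_one (n : ℕ) : ‖(n : ℂ) + 1‖ = n + 1 := by
  exact_mod_cast norm_natCast (n + 1)

theorem PolyGrowth.succ_mul {c : ℕ → ℂ} (hc : PolyGrowth c) (a : ℂ) :
    PolyGrowth fun n => a * (n + 1) * c n := by
  obtain ⟨k, hO⟩ := hc
  have hsucc : (fun n : ℕ => a * ((n : ℂ) + 1)) =O[atTop] fun n => (n : ℝ) + 1 :=
    (IsBigO.of_norm_eventuallyLE (.of_forall fun n => (norm_natCast_add_one n).le)).const_mul_left a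
  exact ⟨k + 1, (hsucc.mul hO).congr_right fun n => (pow_succ' _ k).symm⟩

section ModeSeries

variable {κ ε : ℝ} {c : ℕ → ℂ} {h h' : ℝ → ℂ} {q : ℝ × ℝ}

theorem norm_mode (κ : ℝ) (h : ℝ → ℂ) (n : ℕ) (q : ℝ × ℝ) :
    ‖mode κ h n q‖ = ‖h (κ * (n + 1) * q.1)‖ := by
  simp [mode, norm_exp]

theorem hasFDerivAt_mode (n : ℕ)
    (hd : HasDerivAt h (h' (κ * (n + 1) * q.1)) (κ * (n + 1) * q.1)) :
    HasFDerivAt (mode κ h n)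
      (ofPartials (κ * (n + 1) * mode κ h' n q) (I * (n + 1) * mode κ h n q)) q := by
  have hexp := ((ofRealCLM.hasFDerivAt.comp q (hasFDerivAt_snd (𝕜 := ℝ) (p := q))).const_mul
    (I * ((n : ℂ) + 1))).cexp
  have hrad := hd.hasFDerivAt.comp q
    ((hasFDerivAt_fst (𝕜 := ℝ) (p := q)).const_mul (κ * ((n : ℝ) + 1)))
  refine (hexp.mul hrad).congr_fderiv ?_
  ext <;> simp [mode] <;> ring

theorem summable_succ_pow_mul_exp (k : ℕ) {a : ℝ} (ha : 0 < a) :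
    Summable fun n : ℕ => ((n : ℝ) + 1) ^ k * Real.exp (-a * (n + 1)) := by
  simpa using (summable_nat_add_iff 1).2 (Real.summable_pow_mul_exp_neg_nat_mul k ha)

theorem exists_summable_bound_mode (hκ : 0 < κ) (hc : PolyGrowth c) (hh : ExpDecay h)
    (hε : 0 < ε) :
    ∃ u : ℕ → ℝ, Summable u ∧ ∀ n q, ε < q.1 → ‖c n * mode κ h n q‖ ≤ u n := by
  obtain ⟨k, hck⟩ := hc
  obtain ⟨B, hB⟩ := (isBigO_nat_atTop_iff fun n hn =>
    absurd hn (by positivity : ((n : ℝ) + 1) ^ k ≠ 0)).1 hck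
  obtain ⟨a, ha, hO⟩ := hh (κ * ε) (by positivity)
  obtain ⟨A, hA⟩ := isBigO_principal.1 hO
  have hA₀ : 0 ≤ A :=
    nonneg_of_mul_nonneg_left ((norm_nonneg _).trans (hA _ self_mem_Ici))
      (norm_pos_iff.2 (Real.exp_ne_zero _))
  refine ⟨fun n => B * A * (((n : ℝ) + 1) ^ k * Real.exp (-(a * κ * ε) * (n + 1))),
    (summable_succ_pow_mul_exp k (by positivity)).mul_left _, fun n q hq => ?_⟩
  have hκn : κ ≤ κ * ((n : ℝ) + 1) := le_mul_of_one_le_right hκ.le (by simp)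
  have hx : κ * ε ≤ κ * (n + 1) * q.1 := mul_le_mul hκn hq.le hε.le (by positivity)
  have hc := hB n
  have hmode := hA _ hx
  rw [Real.norm_of_nonneg (by positivity)] at hc hmode
  rw [norm_mul, norm_mode]
  calc ‖c n‖ * ‖h (κ * (n + 1) * q.1)‖
      ≤ B * ((n : ℝ) + 1) ^ k * (A * Real.exp (-a * (κ * (n + 1) * q.1))) :=
        mul_le_mul hc hmode (norm_nonneg _) ((norm_nonneg _).trans hc)
    _ ≤ B * ((n : ℝ) + 1) ^ k * (A * Real.exp (-a * (κ * (n + 1) * ε))) := by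
        have := (norm_nonneg _).trans hc
        simp only [neg_mul]
        gcongr
    _ = B * A * (((n : ℝ) + 1) ^ k * Real.exp (-(a * κ * ε) * (n + 1))) := by
        rw [show -a * (κ * (n + 1) * ε) = -(a * κ * ε) * (n + 1) by ring]
        ring

theorem summable_mode (hκ : 0 < κ) (hc : PolyGrowth c) (hh : ExpDecay h) (hq : 0 < q.1) :
    Summable fun n => c n * mode κ h n q := by
  obtain ⟨u, hu, hbound⟩ := exists_summable_bound_mode hκ hc hh (half_pos hq)
  exact .of_norm_bounded hu fun n => hbound n q (half_lt_self hq)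

theorem hasFDerivAt_modeSeries (hκ : 0 < κ) (hc : PolyGrowth c)
    (hd : ∀ x > 0, HasDerivAt h (h' x) x) (hh : ExpDecay h) (hh' : ExpDecay h') (hq : 0 < q.1) :
    HasFDerivAt (modeSeries κ c h)
      (ofPartials (modeSeries κ (fun n => κ * (n + 1) * c n) h' q)
        (modeSeries κ (fun n => I * (n + 1) * c n) h q)) q := by
  obtain ⟨ε, hε, hεq⟩ := exists_between hq
  obtain ⟨u, hu, hr⟩ := exists_summable_bound_mode hκ (hc.succ_mul κ) hh' hε
  obtain ⟨v, hv, hφ⟩ := exists_summable_bound_mode hκ (hc.succ_mul I) hh hε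
  have hterm : ∀ n, ∀ q ∈ Prod.fst ⁻¹' Ioi ε, HasFDerivAt (fun q => c n * mode κ h n q)
      (ofPartials (κ * (n + 1) * c n * mode κ h' n q) (I * (n + 1) * c n * mode κ h n q)) q := by
    intro n q hq
    have hq₀ : 0 < q.1 := hε.trans hq
    refine ((hasFDerivAt_mode n (hd _ (by positivity))).const_mul (c n)).congr_fderiv ?_
    ext <;> simp <;> ring
  have hderiv := hasFDerivAt_tsum_of_isPreconnected (hu.add hv)
    (isOpen_Ioi.preimage continuous_fst)
    ((convex_Ioi ε).linear_preimage (LinearMap.fst ℝ ℝ ℝ)).isPreconnected hterm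
    (fun n q hq => (norm_ofPartials_le _ _).trans (add_le_add (hr n q hq) (hφ n q hq)))
    hεq (summable_mode hκ hc hh hq) hεq
  rwa [tsum_ofPartials (summable_mode hκ (hc.succ_mul κ) hh' hq)
    (summable_mode hκ (hc.succ_mul I) hh hq)] at hderiv

theorem modeSeries_neg_right (κ : ℝ) (c : ℕ → ℂ) (h : ℝ → ℂ) (q : ℝ × ℝ) :
    modeSeries κ c (fun x => -h x) q = -modeSeries κ c h q := by
  simp only [modeSeries, mode, mul_neg, tsum_neg]

theorem mul_modeSeries_succ_mul (κ : ℝ) (c : ℕ → ℂ) (h : ℝ → ℂ) (q : ℝ × ℝ) :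
    q.1 * modeSeries κ (fun n => κ * (n + 1) * c n) h q =
      modeSeries κ c (fun x => x * h x) q := by
  rw [modeSeries, ← tsum_mul_left]
  refine tsum_congr fun n => ?_
  simp only [mode]
  push_cast
  ring

theorem modeSeries_succ_mul_succ_mul (κ : ℝ) (c : ℕ → ℂ) (h : ℝ → ℂ) (q : ℝ × ℝ) (a : ℂ) :
    modeSeries κ (fun n => a * (n + 1) * (a * (n + 1) * c n)) h q =
      a ^ 2 * modeSeries κ (fun n => (n + 1) ^ 2 * c n) h q := by
  rw [modeSeries, modeSeries, ← tsum_mul_left]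
  exact tsum_congr fun n => by ring

end ModeSeries

/-! ### Wirtinger calculus in cylindrical coordinates -/

/-- The complex coordinate `z = p₀ + i p₁` on `ℝ³`. -/
noncomputable def zCoord : (Fin 3 → ℝ) →L[ℝ] ℂ :=
  ofRealCLM ∘L .proj 0 + I • ofRealCLM ∘L .proj 1

/-- The cylindrical coordinates `(r, φ) = (|z|, p₂)`. -/
noncomputable def cylCoord (p : Fin 3 → ℝ) : ℝ × ℝ := (‖zCoord p‖, p 2)

theorem zCoord_apply (p : Fin 3 → ℝ) : zCoord p = p 0 + I * p 1 := by
  simp [zCoord]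

theorem zCoord_single_zero : zCoord (Pi.single 0 1) = 1 := by
  simp [zCoord_apply]

theorem zCoord_single_one : zCoord (Pi.single 1 1) = I := by
  simp [zCoord_apply]

theorem norm_zCoord (p : Fin 3 → ℝ) : ‖zCoord p‖ = √(p 0 ^ 2 + p 1 ^ 2) := by
  rw [zCoord_apply, mul_comm I, norm_add_mul_I]

theorem zCoord_ne_zero {p : Fin 3 → ℝ} (hp : ¬(p 0 = 0 ∧ p 1 = 0)) : zCoord p ≠ 0 := fun hz =>
  hp ⟨by simpa [zCoord_apply] using congrArg re hz, by simpa [zCoord_apply] using congrArg im hz⟩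

section Wirtinger

variable {f g : (Fin 3 → ℝ) → ℂ} {p : Fin 3 → ℝ}

theorem pd3_congr (i : Fin 3) (hfg : f =ᶠ[𝓝 p] g) : pd3 i f p = pd3 i g p := by
  rw [pd3, pd3, hfg.fderiv_eq]

theorem wZ_congr (hfg : f =ᶠ[𝓝 p] g) : wZ f p = wZ g p := by
  rw [wZ, wZ, pd3_congr 0 hfg, pd3_congr 1 hfg]

theorem wZ_mul (hf : DifferentiableAt ℝ f p) (hg : DifferentiableAt ℝ g p) :
    wZ (fun q => f q * g q) p = wZ f p * g p + f p * wZ g p := by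
  simp only [wZ, pd3, fderiv_fun_mul hf hg, add_apply,
    smul_apply, smul_eq_mul]
  ring

theorem hasFDerivAt_comp_conj_zCoord {F : ℂ → ℂ} (hF : DifferentiableAt ℂ F (conj (zCoord p))) :
    HasFDerivAt (fun q => F (conj (zCoord q)))
      (deriv F (conj (zCoord p)) • (conjCLE.toContinuousLinearMap ∘L zCoord)) p :=
  hF.hasDerivAt.comp_hasFDerivAt p (conjCLE.toContinuousLinearMap ∘L zCoord).hasFDerivAt

theorem wZ_comp_conj_zCoord {F : ℂ → ℂ} (hF : DifferentiableAt ℂ F (conj (zCoord p))) :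
    wZ (fun q => F (conj (zCoord q))) p = 0 := by
  rw [wZ, pd3, pd3, (hasFDerivAt_comp_conj_zCoord hF).fderiv]
  simp only [smul_apply, ContinuousLinearMap.comp_apply, zCoord_single_zero, zCoord_single_one,
    ContinuousLinearEquiv.coe_coe, ContinuousAlgEquiv.coeCLE_apply, conjCAE_apply, map_one, conj_I,
    smul_eq_mul]
  linear_combination 1 / 2 * deriv F (conj (zCoord p)) * I_mul_I

theorem wZ_comp_conj_zCoord_mul {F : ℂ → ℂ} (hF : DifferentiableAt ℂ F (conj (zCoord p)))
    (hf : DifferentiableAt ℝ f p) :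
    wZ (fun q => F (conj (zCoord q)) * f q) p = F (conj (zCoord p)) * wZ f p := by
  rw [wZ_mul (hasFDerivAt_comp_conj_zCoord hF).differentiableAt hf, wZ_comp_conj_zCoord hF,
    zero_mul, zero_add]

/-- The derivative of `cylCoord` at `p`, with first component `(x dx + y dy) / r`; this is the
derivative only off the axis `r = 0`. -/
noncomputable def cylDeriv (p : Fin 3 → ℝ) : (Fin 3 → ℝ) →L[ℝ] ℝ × ℝ :=
  ((p 0 / ‖zCoord p‖) • .proj 0 + (p 1 / ‖zCoord p‖) • .proj 1 :
    (Fin 3 → ℝ) →L[ℝ] ℝ).prod (.proj 2)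

theorem cylDeriv_single_zero (p : Fin 3 → ℝ) :
    cylDeriv p (Pi.single 0 1) = (p 0 / ‖zCoord p‖, 0) := by
  simp [cylDeriv]

theorem cylDeriv_single_one (p : Fin 3 → ℝ) :
    cylDeriv p (Pi.single 1 1) = (p 1 / ‖zCoord p‖, 0) := by
  simp [cylDeriv]

theorem cylDeriv_single_two (p : Fin 3 → ℝ) : cylDeriv p (Pi.single 2 1) = (0, 1) := by
  simp [cylDeriv]

theorem hasFDerivAt_cylCoord (hp : zCoord p ≠ 0) : HasFDerivAt cylCoord (cylDeriv p) p := by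
  have hcoord (i : Fin 3) : HasFDerivAt (fun q : Fin 3 → ℝ => q i)
      (ContinuousLinearMap.proj (R := ℝ) (φ := fun _ : Fin 3 => ℝ) i) p := hasFDerivAt_apply i p
  have hr : 0 < √(p 0 ^ 2 + p 1 ^ 2) := norm_zCoord p ▸ norm_pos_iff.2 hp
  have hsqrt := (((hcoord 0).pow 2).fun_add ((hcoord 1).pow 2)).sqrt (Real.sqrt_pos.1 hr).ne'
  unfold cylCoord
  simp only [norm_zCoord]
  refine HasFDerivAt.prodMk (hsqrt.congr_fderiv ?_) (hcoord 2)
  ext v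
  simp only [norm_zCoord, add_apply, smul_apply, ContinuousLinearMap.proj_apply, smul_eq_mul,
    nsmul_eq_mul, Nat.cast_ofNat, Nat.add_one_sub_one, pow_one]
  field_simp

variable {G : ℝ × ℝ → ℂ} {a b : ℂ}

theorem hasFDerivAt_comp_cylCoord (hp : zCoord p ≠ 0)
    (hG : HasFDerivAt G (ofPartials a b) (cylCoord p)) :
    HasFDerivAt (fun q => G (cylCoord q)) (ofPartials a b ∘L cylDeriv p) p :=
  hG.comp p (hasFDerivAt_cylCoord hp)

theorem wZ_comp_cylCoord (hp : zCoord p ≠ 0)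
    (hG : HasFDerivAt G (ofPartials a b) (cylCoord p)) :
    wZ (fun q => G (cylCoord q)) p = conj (zCoord p) / (2 * ‖zCoord p‖) * a := by
  rw [wZ, pd3, pd3, (hasFDerivAt_comp_cylCoord hp hG).fderiv]
  simp only [ContinuousLinearMap.comp_apply, cylDeriv_single_zero, cylDeriv_single_one,
    ofPartials_apply, ofReal_div, ofReal_zero, zCoord_apply p, map_add, map_mul, conj_ofReal,
    conj_I]
  ring

theorem wZb_comp_cylCoord (hp : zCoord p ≠ 0)
    (hG : HasFDerivAt G (ofPartials a b) (cylCoord p)) :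
    wZb (fun q => G (cylCoord q)) p = zCoord p / (2 * ‖zCoord p‖) * a := by
  rw [wZb, pd3, pd3, (hasFDerivAt_comp_cylCoord hp hG).fderiv]
  simp only [ContinuousLinearMap.comp_apply, cylDeriv_single_zero, cylDeriv_single_one,
    ofPartials_apply, ofReal_div, ofReal_zero, zCoord_apply p]
  ring

theorem pd3_two_comp_cylCoord (hp : zCoord p ≠ 0)
    (hG : HasFDerivAt G (ofPartials a b) (cylCoord p)) :
    pd3 2 (fun q => G (cylCoord q)) p = b := by
  simp [pd3, (hasFDerivAt_comp_cylCoord hp hG).fderiv, cylDeriv_single_two]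

end Wirtinger

/-! ### The linear Plebański-like equation -/

section Plebanski

variable {κ : ℝ} {c : ℕ → ℂ} {h h' k₀ k₁ : ℝ → ℂ} {p : Fin 3 → ℝ}

theorem eventually_zCoord_ne_zero (hp : zCoord p ≠ 0) : ∀ᶠ q in 𝓝 p, zCoord q ≠ 0 :=
  zCoord.continuous.continuousAt.eventually_ne hp

theorem pd3_two_modeSeries (hκ : 0 < κ) (hc : PolyGrowth c)
    (hd : ∀ x > 0, HasDerivAt h (h' x) x) (hh : ExpDecay h) (hh' : ExpDecay h')
    (hp : zCoord p ≠ 0) :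
    pd3 2 (fun q => modeSeries κ c h (cylCoord q)) p =
      modeSeries κ (fun n => I * (n + 1) * c n) h (cylCoord p) :=
  pd3_two_comp_cylCoord hp (hasFDerivAt_modeSeries hκ hc hd hh hh' (norm_pos_iff.2 hp))

theorem pd3_two_pd3_two_modeSeries (hκ : 0 < κ) (hc : PolyGrowth c)
    (hd : ∀ x > 0, HasDerivAt h (h' x) x) (hh : ExpDecay h) (hh' : ExpDecay h')
    (hp : zCoord p ≠ 0) :
    pd3 2 (fun q => pd3 2 (fun q => modeSeries κ c h (cylCoord q)) q) p =
      -modeSeries κ (fun n => (n + 1) ^ 2 * c n) h (cylCoord p) := by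
  have hfirst := (eventually_zCoord_ne_zero hp).mono fun q hq =>
    pd3_two_modeSeries hκ hc hd hh hh' hq
  rw [pd3_congr 2 hfirst, pd3_two_modeSeries hκ (hc.succ_mul I) hd hh hh' hp,
    modeSeries_succ_mul_succ_mul, I_sq, neg_one_mul]

theorem wZb_modeSeries (hκ : 0 < κ) (hc : PolyGrowth c)
    (hk₀' : ∀ x > 0, HasDerivAt k₀ (-k₁ x) x) (hk₀ : ExpDecay k₀) (hk₁ : ExpDecay k₁)
    (hp : zCoord p ≠ 0) :
    wZb (fun q => modeSeries κ c k₀ (cylCoord q)) p =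
      (-2 * conj (zCoord p))⁻¹ * modeSeries κ c (fun x => x * k₁ x) (cylCoord p) := by
  have hz : conj (zCoord p) ≠ 0 := by simpa using hp
  have hr : (‖zCoord p‖ : ℂ) ≠ 0 := by simpa using hp
  rw [wZb_comp_cylCoord hp (hasFDerivAt_modeSeries hκ hc hk₀' hk₀ hk₁.neg (norm_pos_iff.2 hp)),
    modeSeries_neg_right, ← mul_modeSeries_succ_mul, cylCoord]
  field_simp
  linear_combination -modeSeries _ _ _ _ * mul_conj' (zCoord p)

theorem wZ_wZb_modeSeries (hκ : 0 < κ) (hc : PolyGrowth c)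
    (hk₀' : ∀ x > 0, HasDerivAt k₀ (-k₁ x) x)
    (hk₁' : ∀ x > 0, HasDerivAt (fun y : ℝ => y * k₁ y) (-(x * k₀ x)) x)
    (hk₀ : ExpDecay k₀) (hk₁ : ExpDecay k₁) (hp : zCoord p ≠ 0) :
    wZ (fun q => wZb (fun q => modeSeries κ c k₀ (cylCoord q)) q) p =
      (κ / 2) ^ 2 * modeSeries κ (fun n => (n + 1) ^ 2 * c n) k₀ (cylCoord p) := by
  have hz : conj (zCoord p) ≠ 0 := by simpa using hp
  have hr : (‖zCoord p‖ : ℂ) ≠ 0 := by simpa using hp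
  have hS := hasFDerivAt_modeSeries (q := cylCoord p) hκ hc hk₁' hk₁.id_mul hk₀.id_mul.neg
    (norm_pos_iff.2 hp)
  have hfirst := (eventually_zCoord_ne_zero hp).mono fun q hq =>
    wZb_modeSeries hκ hc hk₀' hk₀ hk₁ hq
  rw [wZ_congr hfirst, wZ_comp_conj_zCoord_mul (F := fun w => (-2 * w)⁻¹)
      (by fun_prop (disch := simpa using hp))
      (hasFDerivAt_comp_cylCoord hp hS).differentiableAt,
    wZ_comp_cylCoord hp hS, modeSeries_neg_right, ← mul_modeSeries_succ_mul,
    modeSeries_succ_mul_succ_mul, cylCoord]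
  field_simp

theorem plebanski_modeSeries (hκ : 0 < κ) (hc : PolyGrowth c)
    (hk₀' : ∀ x > 0, HasDerivAt k₀ (-k₁ x) x)
    (hk₁' : ∀ x > 0, HasDerivAt (fun y : ℝ => y * k₁ y) (-(x * k₀ x)) x)
    (hk₀ : ExpDecay k₀) (hk₁ : ExpDecay k₁) (hp : zCoord p ≠ 0) :
    wZ (fun q => wZb (fun q => modeSeries κ c k₀ (cylCoord q)) q) p + (κ / 2) ^ 2 *
      pd3 2 (fun q => pd3 2 (fun q => modeSeries κ c k₀ (cylCoord q)) q) p = 0 := by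
  rw [wZ_wZb_modeSeries hκ hc hk₀' hk₁' hk₀ hk₁ hp,
    pd3_two_pd3_two_modeSeries hκ hc hk₀' hk₀ hk₁.neg hp, mul_neg, add_neg_cancel]

end Plebanski

/-! ### Decay of the Bessel functions and the series `V` -/

section Bessel

variable {x : ℝ}

theorem hasDerivAt_exp_neg_mul_sinh (hx : x ≠ 0) (t : ℝ) :
    HasDerivAt (fun t => -(Real.exp (-x * Real.sinh t) / x))
      (Real.exp (-x * Real.sinh t) * Real.cosh t) t := by
  refine (((Real.hasDerivAt_sinh t).const_mul (-x)).exp.div_const x).fun_neg.congr_deriv ?_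
  field_simp

theorem tendsto_exp_neg_mul_sinh (hx : 0 < x) :
    Tendsto (fun t => -(Real.exp (-x * Real.sinh t) / x)) atTop (𝓝 0) := by
  have hsinh : Tendsto Real.sinh atTop atTop :=
    tendsto_atTop_mono' _ ((eventually_ge_atTop 0).mono fun t ht => Real.self_le_sinh_iff.2 ht)
      tendsto_id
  have hexp := Real.tendsto_exp_atBot.comp (hsinh.const_mul_atTop_of_neg (neg_lt_zero.2 hx))
  simpa using (hexp.div_const x).neg

theorem integrableOn_exp_neg_mul_sinh_mul_cosh (hx : 0 < x) :
    IntegrableOn (fun t => Real.exp (-x * Real.sinh t) * Real.cosh t) (Ioi 0) :=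
  integrableOn_Ioi_deriv_of_nonneg' (fun t _ => hasDerivAt_exp_neg_mul_sinh hx.ne' t)
    (fun t _ => by positivity) (tendsto_exp_neg_mul_sinh hx)

theorem integral_exp_neg_mul_sinh_mul_cosh (hx : 0 < x) :
    ∫ t in Ioi (0 : ℝ), Real.exp (-x * Real.sinh t) * Real.cosh t = 1 / x := by
  rw [integral_Ioi_of_hasDerivAt_of_nonneg' (fun t _ => hasDerivAt_exp_neg_mul_sinh hx.ne' t)
    (fun t _ => by positivity) (tendsto_exp_neg_mul_sinh hx)]
  simp

theorem exp_neg_mul_cosh_le (hx : 0 < x) (t : ℝ) :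
    Real.exp (-x * Real.cosh t) ≤ Real.exp (-(x / 2)) * Real.exp (-(x / 2) * Real.sinh t) := by
  rw [← Real.exp_add, Real.exp_le_exp]
  nlinarith [Real.one_le_cosh t, Real.sinh_lt_cosh t]

theorem norm_integral_le_of_le_exp_neg_mul_cosh (hx : 0 < x) {f : ℝ → ℝ}
    (hf : ∀ t, ‖f t‖ ≤ Real.exp (-x * Real.cosh t) * Real.cosh t) :
    ‖∫ t in Ioi (0 : ℝ), f t‖ ≤ Real.exp (-(x / 2)) * (2 / x) := by
  have hint :=
    (integrableOn_exp_neg_mul_sinh_mul_cosh (half_pos hx)).const_mul (Real.exp (-(x / 2)))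
  refine (norm_integral_le_of_norm_le hint (.of_forall fun t => (hf t).trans ?_)).trans_eq ?_
  · rw [← mul_assoc]
    exact mul_le_mul_of_nonneg_right (exp_neg_mul_cosh_le hx t) (Real.cosh_pos t).le
  · rw [integral_const_mul, integral_exp_neg_mul_sinh_mul_cosh (half_pos hx), one_div_div]

theorem norm_K0_le (hx : 0 < x) : ‖K0 x‖ ≤ Real.exp (-(x / 2)) * (2 / x) :=
  norm_integral_le_of_le_exp_neg_mul_cosh hx fun t => by
    rw [Real.norm_of_nonneg (Real.exp_pos _).le]
    exact le_mul_of_one_le_right (Real.exp_pos _).le (Real.one_le_cosh t)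

theorem norm_K1_le (hx : 0 < x) : ‖K1 x‖ ≤ Real.exp (-(x / 2)) * (2 / x) :=
  norm_integral_le_of_le_exp_neg_mul_cosh hx fun t => (Real.norm_of_nonneg (by positivity)).le

theorem expDecay_of_norm_le {k : ℝ → ℝ}
    (hk : ∀ x > 0, ‖k x‖ ≤ Real.exp (-(x / 2)) * (2 / x)) : ExpDecay fun x => k x := by
  refine fun ε hε => ⟨1 / 2, by positivity, isBigO_principal.2 ⟨2 / ε, fun x hx => ?_⟩⟩
  rw [norm_real, Real.norm_of_nonneg (Real.exp_pos _).le, mul_comm]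
  refine (hk x (hε.trans_le hx)).trans ?_
  rw [show -(1 / 2) * x = -(x / 2) by ring]
  gcongr
  exact hx

end Bessel

/-- The Fourier coefficients of `Vfun`. -/
noncomputable def vCoeff (n : ℕ) : ℂ := 1 / (2 * π * I) / (n + 1) ^ 2

theorem polyGrowth_vCoeff : PolyGrowth vCoeff := by
  refine ⟨0, (isBigO_nat_atTop_iff (by simp)).2 ⟨‖1 / (2 * π * I)‖, fun n => ?_⟩⟩
  have hn : 1 ≤ ‖(n : ℂ) + 1‖ := by simp [norm_natCast_add_one]
  rw [vCoeff, norm_div, norm_pow, pow_zero, norm_one, mul_one]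
  exact div_le_self (norm_nonneg _) (one_le_pow₀ hn)

theorem Vfun_eq_modeSeries :
    Vfun = fun p => modeSeries (2 * π) vCoeff (fun x => K0 x) (cylCoord p) := by
  ext p
  simp only [Vfun, modeSeries, mode, vCoeff, cylCoord, norm_zCoord, ← tsum_mul_left]
  exact tsum_congr fun n => by ring

theorem stmt_14
    (hK0' : ∀ x : ℝ, 0 < x → HasDerivAt K0 (-K1 x) x)
    (hK1' : ∀ x : ℝ, 0 < x → HasDerivAt (fun y => y * K1 y) (-(x * K0 x)) x) :
    ∀ p : Fin 3 → ℝ, ¬(p 0 = 0 ∧ p 1 = 0) →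
      wZ (fun q => wZb Vfun q) p
        + (Real.pi : ℂ) ^ 2 * pd3 2 (fun q => pd3 2 Vfun q) p = 0 := by
  intro p hp
  have hK₀ : ∀ x > 0, HasDerivAt (fun x : ℝ => (K0 x : ℂ)) (-(K1 x : ℂ)) x := fun x hx => by
    simpa only [ofReal_neg] using (hK0' x hx).ofReal_comp
  have hK₁ : ∀ x > 0, HasDerivAt (fun y : ℝ => (y : ℂ) * K1 y) (-(x * K0 x)) x := fun x hx => by
    simpa only [ofReal_neg, ofReal_mul] using (hK1' x hx).ofReal_comp
  have hpde := plebanski_modeSeries Real.two_pi_pos polyGrowth_vCoeff hK₀ hK₁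
    (expDecay_of_norm_le fun _ => norm_K0_le) (expDecay_of_norm_le fun _ => norm_K1_le)
    (zCoord_ne_zero hp)
  rw [ofReal_mul, ofReal_ofNat, mul_div_cancel_left₀ _ two_ne_zero] at hpde
  rwa [Vfun_eq_modeSeries]
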